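/- Let r be a nonzero integer, and let H(r) be the group given by the presentation with generators g₁, g₂, g₃ and relations g₃g₁ = g₁g₃, g₃g₂ = g₂g₃, and g₁⁻¹g₂⁻¹g₁g₂ = g₃ʳ. Then the quotient group H(r)/Z(H(r)) of H(r) by its center is isomorphic to ℤ × ℤ (the free abelian group of rank 2). -/

import Mathlib

/-- The relations of the group `H(r)`: generators `g₁ = of 0`, `g₂ = of 1`, `g₃ = of 2`
subject to `g₃g₁ = g₁g₃`, `g₃g₂ = g₂g₃` and `g₁⁻¹g₂⁻¹g₁g₂ = g₃ʳ`. -/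
def InoueHeisenbergRels (r : ℤ) : Set (FreeGroup (Fin 3)) :=
  { FreeGroup.of 2 * FreeGroup.of 0 * (FreeGroup.of 0 * FreeGroup.of 2)⁻¹,
    FreeGroup.of 2 * FreeGroup.of 1 * (FreeGroup.of 1 * FreeGroup.of 2)⁻¹,
    (FreeGroup.of 0)⁻¹ * (FreeGroup.of 1)⁻¹ * FreeGroup.of 0 * FreeGroup.of 1 *
      ((FreeGroup.of 2) ^ r)⁻¹ }

/-- A concrete model of `H(r)` on triples of integers. -/
@[ext] structure InoueModel (r : ℤ) where
  a : ℤ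
  b : ℤ
  c : ℤ

namespace InoueModel
variable {r : ℤ}

instance : Mul (InoueModel r) := ⟨fun x y => ⟨x.a + y.a, x.b + y.b, x.c + y.c + r * x.a * y.b⟩⟩
instance : One (InoueModel r) := ⟨⟨0, 0, 0⟩⟩
instance : Inv (InoueModel r) := ⟨fun x => ⟨-x.a, -x.b, -x.c + r * x.a * x.b⟩⟩

@[simp] lemma mul_a (x y : InoueModel r) : (x * y).a = x.a + y.a := rfl
@[simp] lemma mul_b (x y : InoueModel r) : (x * y).b = x.b + y.b := rfl
@[simp] lemma mul_c (x y : InoueModel r) : (x * y).c = x.c + y.c + r * x.a * y.b := rfl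
@[simp] lemma one_a : (1 : InoueModel r).a = 0 := rfl
@[simp] lemma one_b : (1 : InoueModel r).b = 0 := rfl
@[simp] lemma one_c : (1 : InoueModel r).c = 0 := rfl
@[simp] lemma inv_a (x : InoueModel r) : (x⁻¹).a = -x.a := rfl
@[simp] lemma inv_b (x : InoueModel r) : (x⁻¹).b = -x.b := rfl
@[simp] lemma inv_c (x : InoueModel r) : (x⁻¹).c = -x.c + r * x.a * x.b := rfl

instance : Group (InoueModel r) :=
  Group.ofLeftAxioms
    (fun x y z => by ext <;> simp <;> ring)
    (fun x => by ext <;> simp)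
    (fun x => by ext <;> simp)

/-- The central one-parameter subgroup. -/
def central : Multiplicative ℤ →* InoueModel r where
  toFun n := ⟨0, 0, n.toAdd⟩
  map_one' := rfl
  map_mul' x y := by ext <;> simp

lemma g3_zpow (n : ℤ) : (⟨0, 0, 1⟩ : InoueModel r) ^ n = ⟨0, 0, n⟩ := by
  have h := map_zpow (central (r := r)) (Multiplicative.ofAdd 1) n
  rw [← ofAdd_zsmul] at h
  simpa [central] using h.symm

/-- Projection to the first two coordinates. -/
def proj : InoueModel r →* Multiplicative (ℤ × ℤ) where
  toFun x := Multiplicative.ofAdd (x.a, x.b)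
  map_one' := rfl
  map_mul' x y := rfl

/-- The images of the generators. -/
def gen (r : ℤ) : Fin 3 → InoueModel r := ![⟨1, 0, 0⟩, ⟨0, 1, 0⟩, ⟨0, 0, 1⟩]

lemma gen_rels : ∀ w ∈ InoueHeisenbergRels r, FreeGroup.lift (gen r) w = 1 := by
  intro w hw
  rcases hw with rfl | rfl | rfl
  · ext <;> simp [gen]
  · ext <;> simp [gen]
  · simp only [map_mul, map_inv, map_zpow, FreeGroup.lift_apply_of]
    simp only [gen, Matrix.cons_val_zero, Matrix.cons_val_one, Matrix.cons_val, g3_zpow]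
    ext <;> simp

/-- The map from the presented group to the model. -/
def psi (r : ℤ) : PresentedGroup (InoueHeisenbergRels r) →* InoueModel r :=
  PresentedGroup.toGroup gen_rels

lemma psi_of (i : Fin 3) : psi r (PresentedGroup.of i) = gen r i :=
  PresentedGroup.toGroup.of gen_rels

lemma center_le (hr : r ≠ 0) :
    Subgroup.center (PresentedGroup (InoueHeisenbergRels r)) ≤ (proj.comp (psi r)).ker := by
  intro x hx
  rw [Subgroup.mem_center_iff] at hx
  have h0 := congrArg (fun y => (psi r y).c) (hx (PresentedGroup.of 0))
  have h1 := congrArg (fun y => (psi r y).c) (hx (PresentedGroup.of 1))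
  simp [psi_of, gen, hr] at h0 h1
  rw [MonoidHom.mem_ker]
  simp only [MonoidHom.comp_apply, proj, MonoidHom.coe_mk, OneHom.coe_mk, h0, h1]
  rfl

lemma rel_one {w : FreeGroup (Fin 3)} (hw : w ∈ InoueHeisenbergRels r) :
    PresentedGroup.mk (InoueHeisenbergRels r) w = 1 :=
  PresentedGroup.one_of_mem hw

lemma comm0 : (PresentedGroup.of 2 : PresentedGroup (InoueHeisenbergRels r)) * PresentedGroup.of 0
    = PresentedGroup.of 0 * PresentedGroup.of 2 := by
  have h := rel_one (r := r) (Or.inl rfl)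
  rw [map_mul, map_inv, mul_inv_eq_one, map_mul, map_mul] at h
  exact h

lemma comm1 : (PresentedGroup.of 2 : PresentedGroup (InoueHeisenbergRels r)) * PresentedGroup.of 1
    = PresentedGroup.of 1 * PresentedGroup.of 2 := by
  have h := rel_one (r := r) (Or.inr (Or.inl rfl))
  rw [map_mul, map_inv, mul_inv_eq_one, map_mul, map_mul] at h
  exact h

lemma comm2 : (PresentedGroup.of 0 : PresentedGroup (InoueHeisenbergRels r))⁻¹ *
    (PresentedGroup.of 1)⁻¹ * PresentedGroup.of 0 * PresentedGroup.of 1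
    = PresentedGroup.of 2 ^ r := by
  have h := rel_one (r := r) (Or.inr (Or.inr rfl))
  rw [map_mul, map_inv, mul_inv_eq_one, map_zpow, map_mul, map_mul, map_mul, map_inv, map_inv] at h
  exact h

lemma g3_central : (PresentedGroup.of 2 : PresentedGroup (InoueHeisenbergRels r)) ∈
    Subgroup.center (PresentedGroup (InoueHeisenbergRels r)) := by
  have h : (⊤ : Subgroup (PresentedGroup (InoueHeisenbergRels r))) ≤
      Subgroup.centralizer {PresentedGroup.of 2} := by
    rw [← PresentedGroup.closure_range_of, Subgroup.closure_le]
    rintro _ ⟨i, rfl⟩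
    rw [SetLike.mem_coe, Subgroup.mem_centralizer_singleton_iff]
    fin_cases i
    · exact comm0.symm
    · exact comm1.symm
    · rfl
  rw [Subgroup.mem_center_iff]
  intro x
  exact Subgroup.mem_centralizer_singleton_iff.1 (h (Subgroup.mem_top x))

lemma ker_le : (proj.comp (psi r)).ker ≤
    Subgroup.center (PresentedGroup (InoueHeisenbergRels r)) := by
  set Z := Subgroup.center (PresentedGroup (InoueHeisenbergRels r)) with hZ
  let q := QuotientGroup.mk' Z
  have q3 : q (PresentedGroup.of 2) = 1 := (QuotientGroup.eq_one_iff _).2 g3_central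
  have hc : Commute (q (PresentedGroup.of 0)) (q (PresentedGroup.of 1)) := by
    have h := congrArg q (comm2 (r := r))
    rw [map_zpow, q3, one_zpow, map_mul, map_mul, map_mul, map_inv, map_inv, ← mul_inv_rev,
      mul_assoc, inv_mul_eq_one] at h
    exact h.symm
  let s : Multiplicative (ℤ × ℤ) →* (PresentedGroup (InoueHeisenbergRels r) ⧸ Z) :=
    { toFun := fun n => q (PresentedGroup.of 0) ^ n.toAdd.1 * q (PresentedGroup.of 1) ^ n.toAdd.2
      map_one' := by simp
      map_mul' := fun m n => by
        simp only [toAdd_mul, Prod.fst_add, Prod.snd_add, zpow_add]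
        have := ((hc.zpow_zpow n.toAdd.1 m.toAdd.2)).eq
        simp only [mul_assoc]
        congr 1
        rw [← mul_assoc, this, mul_assoc] }
  have hs : s.comp (proj.comp (psi r)) = q := by
    apply PresentedGroup.ext
    intro i
    fin_cases i
    · simp [s, proj, psi_of, gen]
    · simp [s, proj, psi_of, gen]
    · simp [s, proj, psi_of, gen, q3]
  intro x hx
  have h := DFunLike.congr_fun hs x
  rw [MonoidHom.comp_apply, MonoidHom.mem_ker.1 hx, map_one] at h
  exact (QuotientGroup.eq_one_iff x).1 h.symm

lemma surj : Function.Surjective (proj.comp (psi r)) := by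
  intro n
  refine ⟨PresentedGroup.of 0 ^ n.toAdd.1 * PresentedGroup.of 1 ^ n.toAdd.2, ?_⟩
  simp only [map_mul, map_zpow, MonoidHom.comp_apply, psi_of]
  apply Multiplicative.toAdd.injective
  ext <;> simp [gen, proj]

end InoueModel

/-- For `r ≠ 0`, the quotient of `H(r)` by its center is isomorphic to `ℤ × ℤ`. -/
theorem InoueHeisenberg_quotient_center_iso_int_prod_int (r : ℤ) (hr : r ≠ 0) :
    Nonempty ((PresentedGroup (InoueHeisenbergRels r) ⧸
        Subgroup.center (PresentedGroup (InoueHeisenbergRels r)))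
      ≃* Multiplicative (ℤ × ℤ)) := by

  exact ⟨(QuotientGroup.quotientMulEquivOfEq
    (le_antisymm (InoueModel.center_le hr) InoueModel.ker_le)).trans
    (QuotientGroup.quotientKerEquivOfSurjective _ InoueModel.surj)⟩
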